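/- arXiv:1602.01286 — 2 statements merged into one kernel-verified Lean document; each statement's English description precedes it below -/
import Mathlib

section
/- There exist constants C > 0, C' > 0 and n₀ such that for every integer n ≥ n₀ and every integer k with n ≥ k ≥ C · n^{1/2} (log n)^{3} / log log n, there exists a set D₂ ⊆ Z_n of cardinality #D₂ ≤ C' · n^{2} (log n)^{5} / (k^{2} (log log n)^{2}) which is a 2-dominating set for every circulant graph C_n(S) with S ⊆ Z̃_n and #S ≥ k; that is, for every such S, Z_n = D₂ ∪ (D₂ + S) ∪ (D₂ + S + S). In particular, the set D₂ does not depend on S. -/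
/-!
Pick `m` points `x₁, …, x_m` of a finite abelian group `G` of order `N` at random. By Hoeffding's
inequality and a union bound over the `N - 1` nontrivial characters `ψ`, some choice makes all the
sums `∑ j, ψ (x j)` at most `ε m` in absolute value as soon as `m ε² > 4 log (4 N)`. Expanding the
number of representations `v = x j + s + t` with `s ∈ S`, `t ∈ T` into characters, the trivial
character contributes the main term `m #S #T / N`, and by Cauchy–Schwarz and Parseval the others
contribute less than that once `ε N ≤ √(#S #T)`. As the bias condition does not mention `S` or
`T`, one set of points serves all of them. Taking `ε = k / N` needs only
`m ≈ 4 N² log (4 N) / k²` points.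
-/

open Finset
open scoped Pointwise

section Sampling

variable {α ι : Type*} [Fintype α]

lemma sum_exp_mul_le_card_mul_exp_half_sq {f : α → ℝ} (hf : ∀ y, |f y| ≤ 1)
    (hf₀ : ∑ y, f y = 0) (t : ℝ) :
    ∑ y, Real.exp (t * f y) ≤ Fintype.card α * Real.exp (t ^ 2 / 2) :=
  calc ∑ y, Real.exp (t * f y)
      ≤ ∑ y, (Real.cosh t + f y * Real.sinh t) :=
        sum_le_sum fun y _ ↦ mul_comm t (f y) ▸ Real.exp_mul_le_cosh_add_mul_sinh (hf y) t
    _ = Fintype.card α * Real.cosh t := by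
        rw [sum_add_distrib, ← sum_mul, hf₀, zero_mul, add_zero, sum_const, nsmul_eq_mul, card_univ]
    _ ≤ Fintype.card α * Real.exp (t ^ 2 / 2) := by
        gcongr
        exact Real.cosh_le_exp_half_sq t

variable [Nonempty α] [Fintype ι]

lemma exists_forall_sum_lt_mul {f : ι → α → ℝ} (hf : ∀ i y, |f i y| ≤ 1)
    (hf₀ : ∀ i, ∑ y, f i y = 0) {t : ℝ} (ht : 0 < t) {m : ℕ}
    (hm : Fintype.card ι < Real.exp (m * t ^ 2 / 2)) :
    ∃ x : Fin m → α, ∀ i, ∑ j, f i (x j) < m * t := by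
  -- Summing the exponential moments over `i` before averaging over `x` is the union bound.
  have total_le : ∑ x : Fin m → α, ∑ i, Real.exp (t * ∑ j, f i (x j)) ≤
      ∑ _x : Fin m → α, Fintype.card ι * Real.exp (m * t ^ 2 / 2) :=
    calc ∑ x : Fin m → α, ∑ i, Real.exp (t * ∑ j, f i (x j))
        = ∑ i, (∑ y, Real.exp (t * f i y)) ^ m := by
          rw [sum_comm]
          simp only [mul_sum, Real.exp_sum, Fintype.sum_pow]
      _ ≤ ∑ _i : ι, (Fintype.card α * Real.exp (t ^ 2 / 2)) ^ m := by
          gcongr with i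
          exact sum_exp_mul_le_card_mul_exp_half_sq (hf i) (hf₀ i) t
      _ = ∑ _x : Fin m → α, Fintype.card ι * Real.exp (m * t ^ 2 / 2) := by
          rw [mul_pow, ← Real.exp_nat_mul, ← mul_div_assoc]
          simp only [sum_const, card_univ, nsmul_eq_mul, Fintype.card_fun, Fintype.card_fin,
            Nat.cast_pow]
          ring
  obtain ⟨x, -, hx⟩ := exists_le_of_sum_le univ_nonempty total_le
  refine ⟨x, fun i ↦ ?_⟩
  have exp_lt : Real.exp (t * ∑ j, f i (x j)) < Real.exp (t * (m * t)) :=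
    calc Real.exp (t * ∑ j, f i (x j))
        ≤ ∑ i, Real.exp (t * ∑ j, f i (x j)) :=
          single_le_sum (f := fun i ↦ Real.exp (t * ∑ j, f i (x j)))
            (fun _ _ ↦ (Real.exp_pos _).le) (mem_univ i)
      _ ≤ Fintype.card ι * Real.exp (m * t ^ 2 / 2) := hx
      _ < Real.exp (m * t ^ 2 / 2) * Real.exp (m * t ^ 2 / 2) := by gcongr
      _ = Real.exp (t * (m * t)) := by
          rw [← Real.exp_add]
          ring_nf
  exact lt_of_mul_lt_mul_left (Real.exp_lt_exp.1 exp_lt) ht.le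

lemma norm_sq_lt_of_re_I_pow_mul_lt {z : ℂ} {r : ℝ}
    (h : ∀ a : Fin 4, (Complex.I ^ (a : ℕ) * z).re < r) : ‖z‖ ^ 2 < 2 * r ^ 2 := by
  have re_lt : z.re < r := by simpa using h 0
  have neg_im_lt : -z.im < r := by simpa using h 1
  have neg_re_lt : -z.re < r := by simpa using h 2
  have im_lt : z.im < r := by simpa [Complex.I_pow_three] using h 3
  have re_sq_lt : z.re ^ 2 < r ^ 2 := sq_lt_sq' (by linarith) re_lt
  have im_sq_lt : z.im ^ 2 < r ^ 2 := sq_lt_sq' (by linarith) im_lt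
  rw [Complex.sq_norm, Complex.normSq_apply]
  linarith

lemma exists_forall_norm_sum_lt_mul {g : ι → α → ℂ} (hg : ∀ i y, ‖g i y‖ ≤ 1)
    (hg₀ : ∀ i, ∑ y, g i y = 0) {ε : ℝ} (hε : 0 < ε) {m : ℕ}
    (hm : 4 * Fintype.card ι < Real.exp (m * ε ^ 2 / 4)) :
    ∃ x : Fin m → α, ∀ i, ‖∑ j, g i (x j)‖ < m * ε := by
  -- Bounding the real parts of the four rotations of a sum bounds its norm up to a factor `√2`.
  let f : ι × Fin 4 → α → ℝ := fun i y ↦ (Complex.I ^ (i.2 : ℕ) * g i.1 y).re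
  have hf (i : ι × Fin 4) (y : α) : |f i y| ≤ 1 := by
    refine (Complex.abs_re_le_norm _).trans ?_
    simpa using hg i.1 y
  have hf₀ (i : ι × Fin 4) : ∑ y, f i y = 0 := by
    simp only [f, ← Complex.re_sum, ← mul_sum, hg₀, mul_zero, Complex.zero_re]
  have half_sq : (ε / √2) ^ 2 = ε ^ 2 / 2 := by rw [div_pow, Real.sq_sqrt zero_le_two]
  have hm' : Fintype.card (ι × Fin 4) < Real.exp (m * (ε / √2) ^ 2 / 2) := by
    rw [half_sq]
    convert hm using 1
    · simp [mul_comm]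
    · ring_nf
  obtain ⟨x, hx⟩ := exists_forall_sum_lt_mul hf hf₀ (by positivity : 0 < ε / √2) hm'
  simp only [f, ← Complex.re_sum, ← mul_sum] at hx
  refine ⟨x, fun i ↦ lt_of_pow_lt_pow_left₀ 2 (by positivity) ?_⟩
  calc ‖∑ j, g i (x j)‖ ^ 2
      < 2 * (m * (ε / √2)) ^ 2 :=
        norm_sq_lt_of_re_I_pow_mul_lt fun a ↦ hx (i, a)
    _ = (m * ε) ^ 2 := by
        rw [mul_pow, half_sq]
        ring

end Sampling

section Representations

variable {G ι : Type*} [Add G] [DecidableEq G] [Fintype ι]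

/-- The number of representations `v = x j + s + t` with `s ∈ S` and `t ∈ T`, counted with
multiplicity in `j`. -/
def repCount (x : ι → G) (S T : Finset G) (v : G) : ℕ :=
  #{p ∈ univ ×ˢ S ×ˢ T | x p.1 + p.2.1 + p.2.2 = v}

lemma mem_image_add_add_of_repCount_pos {x : ι → G} {S T : Finset G} {v : G}
    (h : 0 < repCount x S T v) : v ∈ univ.image x + S + T := by
  obtain ⟨⟨j, s, t⟩, hp⟩ := card_pos.1 h
  simp only [mem_filter, mem_product] at hp
  obtain ⟨⟨hj, hs, ht⟩, rfl⟩ := hp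
  exact add_mem_add (add_mem_add (mem_image_of_mem x hj) hs) ht

end Representations

section Fourier

variable {G ι κ : Type*} [AddCommGroup G] [Fintype G]

lemma sum_addChar_neg_mul_sum [DecidableEq G] (s : Finset κ) (y : κ → G) (v : G) :
    ∑ ψ : AddChar G ℂ, ψ (-v) * ∑ p ∈ s, ψ (y p) = Fintype.card G * #{p ∈ s | y p = v} :=
  calc ∑ ψ : AddChar G ℂ, ψ (-v) * ∑ p ∈ s, ψ (y p)
      = ∑ p ∈ s, ∑ ψ : AddChar G ℂ, ψ (y p - v) := by
        rw [sum_comm]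
        simp only [mul_sum, sub_eq_neg_add, AddChar.map_add_eq_mul]
    _ = Fintype.card G * #{p ∈ s | y p = v} := by
        simp [AddChar.sum_apply_eq_ite, sub_eq_zero, ← sum_filter, mul_comm]

lemma sum_norm_sq_sum_addChar (S : Finset G) :
    ∑ ψ : AddChar G ℂ, ‖∑ s ∈ S, ψ s‖ ^ 2 = Fintype.card G * #S := by
  classical
  have norm_sq_eq (ψ : AddChar G ℂ) :
      ((‖∑ s ∈ S, ψ s‖ ^ 2 : ℝ) : ℂ) = ψ (-0) * ∑ p ∈ S ×ˢ S, ψ (p.1 - p.2) := by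
    rw [neg_zero, AddChar.map_zero_eq_one, one_mul, Complex.ofReal_pow, ← Complex.mul_conj',
      map_sum, sum_mul_sum, sum_product]
    simp only [sub_eq_add_neg, AddChar.map_add_eq_mul, AddChar.map_neg_eq_conj]
  have diagonal : {p ∈ S ×ˢ S | p.1 - p.2 = 0} = S.diag := by
    ext p
    simp only [mem_filter, mem_product, mem_diag, sub_eq_zero]
    grind
  rw [← Complex.ofReal_inj, Complex.ofReal_sum, sum_congr rfl fun ψ _ ↦ norm_sq_eq ψ,
    sum_addChar_neg_mul_sum, diagonal, diag_card]
  norm_cast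

lemma sum_erase_zero_norm_sq_sum_addChar (S : Finset G) :
    ∑ ψ ∈ univ.erase (0 : AddChar G ℂ), ‖∑ s ∈ S, ψ s‖ ^ 2 = #S * (Fintype.card G - #S) := by
  have parseval := sum_norm_sq_sum_addChar S
  rw [← add_sum_erase _ _ (mem_univ 0)] at parseval
  simp only [AddChar.zero_apply, sum_const, nsmul_eq_mul, mul_one,
    Complex.norm_natCast] at parseval
  linarith

variable [Fintype ι]

/-- A family of points of a finite abelian group is `ε`-biased if the average of each nontrivial
character over it is at most `ε` in absolute value. The average is written without division, so
that the empty family is `ε`-biased for every `ε`. -/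
def IsBiased (ε : ℝ) (x : ι → G) : Prop :=
  ∀ ψ : AddChar G ℂ, ψ ≠ 0 → ‖∑ j, ψ (x j)‖ ≤ Fintype.card ι * ε

lemma exists_isBiased {ε : ℝ} (hε : 0 < ε) {m : ℕ}
    (hm : 4 * Fintype.card G < Real.exp (m * ε ^ 2 / 4)) : ∃ x : Fin m → G, IsBiased ε x := by
  have card_le : Fintype.card {ψ : AddChar G ℂ // ψ ≠ 0} ≤ Fintype.card G :=
    (Fintype.card_subtype_le _).trans (AddChar.card_addChar_le _ _)
  obtain ⟨x, hx⟩ := exists_forall_norm_sum_lt_mul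
    (g := fun (ψ : {ψ : AddChar G ℂ // ψ ≠ 0}) y ↦ ψ.1 y)
    (fun ψ y ↦ (ψ.1.norm_apply y).le) (fun ψ ↦ AddChar.sum_eq_zero_iff_ne_zero.2 ψ.2) hε
    (lt_of_le_of_lt (by gcongr) hm)
  exact ⟨x, fun ψ hψ ↦ by simpa using (hx ⟨ψ, hψ⟩).le⟩

variable [DecidableEq G]

lemma sum_erase_zero_addChar_eq_card_mul_repCount_sub (x : ι → G) (S T : Finset G) (v : G) :
    ∑ ψ ∈ univ.erase (0 : AddChar G ℂ),
        ψ (-v) * ((∑ j, ψ (x j)) * ((∑ s ∈ S, ψ s) * ∑ t ∈ T, ψ t)) =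
      Fintype.card G * repCount x S T v - Fintype.card ι * (#S * #T) := by
  have sum_prod (ψ : AddChar G ℂ) : ∑ p ∈ univ ×ˢ S ×ˢ T, ψ (x p.1 + p.2.1 + p.2.2) =
      (∑ j, ψ (x j)) * ((∑ s ∈ S, ψ s) * ∑ t ∈ T, ψ t) := by
    simp only [AddChar.map_add_eq_mul, sum_product, ← mul_sum, ← sum_mul, mul_assoc]
  have expansion := sum_addChar_neg_mul_sum (univ ×ˢ S ×ˢ T) (fun p ↦ x p.1 + p.2.1 + p.2.2) v
  simp only [sum_prod] at expansion
  rw [← add_sum_erase _ _ (mem_univ (0 : AddChar G ℂ))] at expansion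
  simp only [AddChar.zero_apply, sum_const, nsmul_eq_mul, mul_one, one_mul, card_univ]
    at expansion
  exact eq_sub_of_add_eq' expansion

namespace IsBiased

variable {ε : ℝ} {x : ι → G}

lemma sq_card_mul_repCount_sub_le (hx : IsBiased ε x) (S T : Finset G) (v : G) :
    (Fintype.card G * repCount x S T v - Fintype.card ι * (#S * #T) : ℝ) ^ 2 ≤
      (Fintype.card ι * ε) ^ 2 *
        ((#S * (Fintype.card G - #S)) * (#T * (Fintype.card G - #T))) := by
  have norm_le (ψ : AddChar G ℂ) (hψ : ψ ∈ univ.erase 0) :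
      ‖ψ (-v) * ((∑ j, ψ (x j)) * ((∑ s ∈ S, ψ s) * ∑ t ∈ T, ψ t))‖ ≤
        Fintype.card ι * ε * (‖∑ s ∈ S, ψ s‖ * ‖∑ t ∈ T, ψ t‖) := by
    rw [norm_mul, ψ.norm_apply, one_mul, norm_mul, norm_mul]
    gcongr
    exact hx ψ (ne_of_mem_erase hψ)
  calc (Fintype.card G * repCount x S T v - Fintype.card ι * (#S * #T) : ℝ) ^ 2
      = ‖∑ ψ ∈ univ.erase (0 : AddChar G ℂ),
          ψ (-v) * ((∑ j, ψ (x j)) * ((∑ s ∈ S, ψ s) * ∑ t ∈ T, ψ t))‖ ^ 2 := by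
        rw [sum_erase_zero_addChar_eq_card_mul_repCount_sub, ← sq_abs, ← Real.norm_eq_abs,
          ← Complex.norm_real]
        push_cast
        rfl
    _ ≤ (∑ ψ ∈ univ.erase (0 : AddChar G ℂ),
          Fintype.card ι * ε * (‖∑ s ∈ S, ψ s‖ * ‖∑ t ∈ T, ψ t‖)) ^ 2 := by
        gcongr
        exact norm_sum_le_of_le _ norm_le
    _ ≤ (Fintype.card ι * ε) ^ 2 *
          ((#S * (Fintype.card G - #S)) * (#T * (Fintype.card G - #T))) := by
        rw [← mul_sum, mul_pow, ← sum_erase_zero_norm_sq_sum_addChar,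
          ← sum_erase_zero_norm_sq_sum_addChar]
        gcongr
        exact sum_mul_sq_le_sq_mul_sq _ _ _

lemma repCount_pos [Nonempty ι] (hx : IsBiased ε x) {S T : Finset G} (hS : S.Nonempty)
    (hT : T.Nonempty) (h : (ε * Fintype.card G) ^ 2 ≤ #S * #T) (v : G) :
    0 < repCount x S T v := by
  by_contra! hv
  have mixing := hx.sq_card_mul_repCount_sub_le S T v
  rw [Nat.le_zero.1 hv, Nat.cast_zero, mul_zero, zero_sub, neg_sq] at mixing
  set N := (Fintype.card G : ℝ)
  set m := (Fintype.card ι : ℝ)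
  have : 0 < m := Nat.cast_pos.2 Fintype.card_pos
  have hS₀ : (0 : ℝ) < #S := Nat.cast_pos.2 hS.card_pos
  have hT₀ : (0 : ℝ) < #T := Nat.cast_pos.2 hT.card_pos
  have hSN : 0 ≤ N - #S := sub_nonneg.2 (Nat.cast_le.2 S.card_le_univ)
  have hTN : 0 ≤ N - #T := sub_nonneg.2 (Nat.cast_le.2 T.card_le_univ)
  have compl_lt : (N - #S) * (N - #T) < N ^ 2 :=
    calc (N - #S) * (N - #T) ≤ N * (N - #T) := by
          gcongr
          linarith
      _ < N * N := by
          gcongr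
          all_goals linarith
      _ = N ^ 2 := (sq N).symm
  have lt_self : (m * (#S * #T)) ^ 2 * N ^ 2 < (m * (#S * #T)) ^ 2 * N ^ 2 :=
    calc (m * (#S * #T)) ^ 2 * N ^ 2
        ≤ (m * ε) ^ 2 * ((#S * (N - #S)) * (#T * (N - #T))) * N ^ 2 := by gcongr
      _ = m ^ 2 * (#S * #T) * ((N - #S) * (N - #T)) * (ε * N) ^ 2 := by ring
      _ ≤ m ^ 2 * (#S * #T) * ((N - #S) * (N - #T)) * (#S * #T) := by gcongr
      _ < m ^ 2 * (#S * #T) * N ^ 2 * (#S * #T) := by gcongr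
      _ = (m * (#S * #T)) ^ 2 * N ^ 2 := by ring
  exact lt_self.false

lemma image_add_add_eq_univ [Nonempty ι] (hx : IsBiased ε x) {S T : Finset G}
    (hS : S.Nonempty) (hT : T.Nonempty) (h : (ε * Fintype.card G) ^ 2 ≤ #S * #T) :
    univ.image x + S + T = univ :=
  eq_univ_of_forall fun v ↦ mem_image_add_add_of_repCount_pos (hx.repCount_pos hS hT h v)

end IsBiased

end Fourier

lemma one_lt_log_of_three_le {x : ℝ} (hx : 3 ≤ x) : 1 < Real.log x :=
  (Real.lt_log_iff_exp_lt (by linarith)).2 (by linarith [Real.exp_one_lt_three])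

lemma four_mul_sq_mul_log_div_add_one_le {n k : ℝ} (hn : 4 ≤ n) (hk : 0 < k) (hkn : k ≤ n) :
    4 * n ^ 2 * Real.log (4 * n) / k ^ 2 + 1 ≤ 9 * n ^ 2 * Real.log n / k ^ 2 := by
  have log_le : Real.log (4 * n) ≤ 2 * Real.log n := by
    rw [Real.log_mul (by norm_num) (by positivity)]
    linarith [Real.log_le_log (by norm_num) hn]
  have one_le_log : 1 ≤ Real.log n := (one_lt_log_of_three_le (by linarith)).le
  have sq_le : k ^ 2 ≤ n ^ 2 * Real.log n :=
    calc k ^ 2 ≤ n ^ 2 := by gcongr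
      _ ≤ n ^ 2 * Real.log n := le_mul_of_one_le_right (by positivity) one_le_log
  rw [div_add_one (by positivity)]
  gcongr
  calc 4 * n ^ 2 * Real.log (4 * n) + k ^ 2
      ≤ 4 * n ^ 2 * (2 * Real.log n) + n ^ 2 * Real.log n := by gcongr
    _ = 9 * n ^ 2 * Real.log n := by ring

lemma le_pow_five_div_log_sq {x : ℝ} (hx : 1 < x) : x ≤ x ^ 5 / Real.log x ^ 2 := by
  have log_pos := Real.log_pos hx
  rw [le_div_iff₀ (by positivity)]
  calc x * Real.log x ^ 2
      ≤ x * x ^ 2 := by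
        gcongr
        exact Real.log_le_self (by positivity)
    _ = x ^ 3 := by ring
    _ ≤ x ^ 5 := pow_le_pow_right₀ hx.le (by norm_num)

lemma four_mul_sq_mul_log_div_add_one_le_log_log {n k : ℝ} (hn : 4 ≤ n) (hk : 0 < k)
    (hkn : k ≤ n) :
    4 * n ^ 2 * Real.log (4 * n) / k ^ 2 + 1 ≤
      9 * n ^ 2 * Real.log n ^ 5 / (k ^ 2 * Real.log (Real.log n) ^ 2) :=
  calc 4 * n ^ 2 * Real.log (4 * n) / k ^ 2 + 1
      ≤ 9 * n ^ 2 * Real.log n / k ^ 2 := four_mul_sq_mul_log_div_add_one_le hn hk hkn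
    _ ≤ 9 * n ^ 2 * (Real.log n ^ 5 / Real.log (Real.log n) ^ 2) / k ^ 2 := by
        gcongr
        exact le_pow_five_div_log_sq (one_lt_log_of_three_le (by linarith))
    _ = 9 * n ^ 2 * Real.log n ^ 5 / (k ^ 2 * Real.log (Real.log n) ^ 2) := by ring

theorem exists_universal_two_dominating_set_general {G : Type*} [AddCommGroup G] [Fintype G]
    [DecidableEq G] {k : ℝ} (hk : 0 < k) :
    ∃ D : Finset G, #D ≤ 4 * Fintype.card G ^ 2 * Real.log (4 * Fintype.card G) / k ^ 2 + 1 ∧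
      ∀ S T : Finset G, k ^ 2 ≤ #S * #T → D + S + T = univ := by
  have hG : (0 : ℝ) < Fintype.card G := Nat.cast_pos.2 Fintype.card_pos
  have hlog : 0 ≤ Real.log (4 * Fintype.card G) :=
    Real.log_nonneg (by linarith [show (1 : ℝ) ≤ Fintype.card G by exact_mod_cast Fintype.card_pos])
  set M : ℝ := 4 * Fintype.card G ^ 2 * Real.log (4 * Fintype.card G) / k ^ 2 with hM
  have exp_gt : 4 * Fintype.card G < Real.exp ((⌊M⌋₊ + 1 : ℕ) * (k / Fintype.card G) ^ 2 / 4) := by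
    rw [← Real.log_lt_iff_lt_exp (by positivity), Nat.cast_add_one]
    calc Real.log (4 * Fintype.card G) = M * (k / Fintype.card G) ^ 2 / 4 := by
          rw [hM]
          field_simp
      _ < (⌊M⌋₊ + 1) * (k / Fintype.card G) ^ 2 / 4 := by
          gcongr
          exact Nat.lt_floor_add_one M
  obtain ⟨x, hx⟩ := exists_isBiased (by positivity) exp_gt
  refine ⟨univ.image x, ?_, fun S T hST ↦ ?_⟩
  · calc (#(univ.image x) : ℝ) ≤ (⌊M⌋₊ + 1 : ℕ) := by
          exact_mod_cast card_image_le.trans (by simp)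
      _ ≤ M + 1 := by
          push_cast
          gcongr
          exact Nat.floor_le (by positivity)
  · have hST₀ : 0 < #S * #T := by exact_mod_cast (pow_pos hk 2).trans_le hST
    refine hx.image_add_add_eq_univ (card_pos.1 (Nat.pos_of_mul_pos_right hST₀))
      (card_pos.1 (Nat.pos_of_mul_pos_left hST₀)) ?_
    rwa [div_mul_cancel₀ k hG.ne']

/-- There exist `C, C' > 0` and `n₀` such that for every `n ≥ n₀` and every
integer `k` with `n ≥ k ≥ C n^{1/2} (log n)^3 / log log n`, there is a set `D₂ ⊆ Z_n` with
`#D₂ ≤ C' n² (log n)^5 / (k² (log log n)²)` which is a 2-dominating set of every circulant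
graph `C_n(S)` with `S ⊆ Z̃_n`, `#S ≥ k`; i.e. `Z_n = D₂ ∪ (D₂ + S) ∪ (D₂ + S + S)`.
The set `D₂` does not depend on `S`. -/
theorem exists_universal_two_dominating_set :
    ∃ C C' : ℝ, C > 0 ∧ C' > 0 ∧ ∃ n₀ : ℕ, ∀ n : ℕ, n₀ ≤ n →
      ∀ k : ℕ, k ≤ n →
        C * (n : ℝ) ^ ((1 : ℝ) / 2) * (Real.log n) ^ 3 / Real.log (Real.log n) ≤ (k : ℝ) →
        ∃ D : Finset (ZMod n),
          (D.card : ℝ) ≤ C' * (n : ℝ) ^ 2 * (Real.log n) ^ 5 /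
              ((k : ℝ) ^ 2 * (Real.log (Real.log n)) ^ 2) ∧
          ∀ S : Finset (ZMod n), (0 : ZMod n) ∉ S → k ≤ S.card →
            ∀ v : ZMod n, v ∈ D ∨ (∃ d ∈ D, ∃ s ∈ S, v = d + s) ∨
              (∃ d ∈ D, ∃ s ∈ S, ∃ t ∈ S, v = d + s + t) := by
  refine ⟨1, 9, one_pos, by norm_num, 4, fun n hn k hkn hk ↦ ?_⟩
  have : NeZero n := ⟨by omega⟩
  have hn4 : (4 : ℝ) ≤ n := by exact_mod_cast hn
  have hlog : 1 < Real.log n := one_lt_log_of_three_le (by linarith)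
  have hloglog : 0 < Real.log (Real.log n) := Real.log_pos hlog
  have hk₀ : (0 : ℝ) < k := lt_of_lt_of_le (by positivity) hk
  obtain ⟨D, hD, hDS⟩ := exists_universal_two_dominating_set_general (G := ZMod n) hk₀
  rw [ZMod.card] at hD
  refine ⟨D, hD.trans (four_mul_sq_mul_log_div_add_one_le_log_log hn4 hk₀ (by exact_mod_cast hkn)),
    fun S _ hS v ↦ Or.inr (Or.inr ?_)⟩
  have hv : v ∈ D + S + S := by
    rw [hDS S S (by rw [← sq]; gcongr)]
    exact mem_univ v
  obtain ⟨_, hds, t, ht, rfl⟩ := mem_add.1 hv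
  obtain ⟨d, hd, s, hs, rfl⟩ := mem_add.1 hds
  exact ⟨d, hd, s, hs, t, ht, rfl⟩
end

section
/- Let n ≥ 2 and let L be a positive integer with L < 0.5·n^{1/2}. Then the set W = {k·ℓ^{-1} mod n : 1 ≤ k ≤ L, ℓ ∈ 𝓛} ⊆ Z_n has cardinality exactly #W = L · #𝓛. -/
/-- The set `𝓛 = 𝓛(n, L)` of primes `ℓ` with `L < ℓ ≤ 2L` and `gcd(ℓ, n) = 1`. -/
def calL (n L : ℕ) : Finset ℕ :=
  (Finset.Ioc L (2 * L)).filter fun ℓ => Nat.Prime ℓ ∧ Nat.Coprime ℓ n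

/-- The set `W = W(n, L) = {k·ℓ⁻¹ mod n : 1 ≤ k ≤ L, ℓ ∈ 𝓛} ⊆ Z_n`. -/
def calW (n L : ℕ) : Finset (ZMod n) :=
  ((Finset.Icc 1 L) ×ˢ calL n L).image fun p => (p.1 : ZMod n) * (p.2 : ZMod n)⁻¹

/-!
For `k ≤ L < ℓ` with `ℓ` prime, the fraction `k / ℓ` is in lowest terms, so distinct pairs `(k, ℓ)`
give distinct rational numbers. Two such fractions `k / ℓ` and `k' / ℓ'` agree modulo `n` exactly
when `k * ℓ' ≡ k' * ℓ [MOD n]`. Both products are at most `2 * L ^ 2 < n`, so the congruence is an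
equality and the fractions already agree as rational numbers.
-/

section ReducedFractions

variable {n a b c d : ℕ}

theorem eq_and_eq_of_coprime_of_mul_eq_mul (hab : a.Coprime b) (hcd : c.Coprime d)
    (h : a * d = c * b) : a = c ∧ b = d :=
  ⟨Nat.dvd_antisymm
      (hab.dvd_of_dvd_mul_right (h ▸ dvd_mul_right a d))
      (hcd.dvd_of_dvd_mul_right (h ▸ dvd_mul_right c b)),
    Nat.dvd_antisymm
      (hab.symm.dvd_of_dvd_mul_left (h ▸ dvd_mul_left b c))
      (hcd.symm.dvd_of_dvd_mul_left (h ▸ dvd_mul_left d a))⟩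

theorem zmod_mul_inv_eq_mul_inv_iff {x y u v : ZMod n} (hu : IsUnit u) (hv : IsUnit v) :
    x * u⁻¹ = y * v⁻¹ ↔ x * v = y * u := by
  lift u to (ZMod n)ˣ using hu
  lift v to (ZMod n)ˣ using hv
  rw [ZMod.inv_coe_unit, ZMod.inv_coe_unit, Units.mul_inv_eq_mul_inv_iff]

theorem zmod_natCast_mul_inv_eq_iff_modEq (hb : b.Coprime n) (hd : d.Coprime n) :
    (a : ZMod n) * (b : ZMod n)⁻¹ = c * (d : ZMod n)⁻¹ ↔ a * d ≡ c * b [MOD n] := by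
  rw [zmod_mul_inv_eq_mul_inv_iff ((ZMod.isUnit_iff_coprime b n).2 hb)
    ((ZMod.isUnit_iff_coprime d n).2 hd), ← Nat.cast_mul, ← Nat.cast_mul,
    ZMod.natCast_eq_natCast_iff]

theorem eq_and_eq_of_zmod_natCast_mul_inv_eq (hab : a.Coprime b) (hcd : c.Coprime d)
    (hb : b.Coprime n) (hd : d.Coprime n) (had : a * d < n) (hcb : c * b < n)
    (h : (a : ZMod n) * (b : ZMod n)⁻¹ = c * (d : ZMod n)⁻¹) : a = c ∧ b = d :=
  eq_and_eq_of_coprime_of_mul_eq_mul hab hcd <|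
    ((zmod_natCast_mul_inv_eq_iff_modEq hb hd).1 h).eq_of_lt_of_lt had hcb

end ReducedFractions

section Parameters

variable {n L k l : ℕ}

theorem coprime_of_mem_Icc_of_mem_calL (hk : k ∈ Finset.Icc 1 L) (hl : l ∈ calL n L) :
    k.Coprime l := by
  simp only [calL, Finset.mem_filter, Finset.mem_Ioc] at hl
  obtain ⟨⟨hLl, -⟩, hprime, -⟩ := hl
  obtain ⟨hk_pos, hkL⟩ := Finset.mem_Icc.1 hk
  exact (Nat.coprime_of_lt_prime (Nat.ne_of_gt hk_pos) (hkL.trans_lt hLl) hprime).symm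

theorem coprime_modulus_of_mem_calL (hl : l ∈ calL n L) : l.Coprime n :=
  (Finset.mem_filter.1 hl).2.2

theorem mul_le_two_mul_sq_of_mem_calL (hk : k ≤ L) (hl : l ∈ calL n L) : k * l ≤ 2 * L ^ 2 :=
  calc
    k * l ≤ L * (2 * L) := Nat.mul_le_mul hk (Finset.mem_Ioc.1 (Finset.mem_filter.1 hl).1).2
    _ = 2 * L ^ 2 := by ring

theorem injOn_mul_inv_Icc_product_calL (h : 2 * L ^ 2 < n) :
    Set.InjOn (fun p : ℕ × ℕ => (p.1 : ZMod n) * (p.2 : ZMod n)⁻¹)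
      (Finset.Icc 1 L ×ˢ calL n L : Finset (ℕ × ℕ)) := by
  rintro ⟨k, l⟩ hkl ⟨k', l'⟩ hkl' heq
  obtain ⟨hk, hl⟩ := Finset.mem_product.1 hkl
  obtain ⟨hk', hl'⟩ := Finset.mem_product.1 hkl'
  have hcross : k * l' < n :=
    (mul_le_two_mul_sq_of_mem_calL (Finset.mem_Icc.1 hk).2 hl').trans_lt h
  have hcross' : k' * l < n :=
    (mul_le_two_mul_sq_of_mem_calL (Finset.mem_Icc.1 hk').2 hl).trans_lt h
  exact Prod.ext_iff.2 <| eq_and_eq_of_zmod_natCast_mul_inv_eq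
    (coprime_of_mem_Icc_of_mem_calL hk hl) (coprime_of_mem_Icc_of_mem_calL hk' hl')
    (coprime_modulus_of_mem_calL hl) (coprime_modulus_of_mem_calL hl') hcross hcross' heq

end Parameters

theorem four_mul_sq_lt_of_lt_half_mul_sqrt {x y : ℝ} (hx : 0 ≤ x) (h : x < 0.5 * √y) :
    4 * x ^ 2 < y := by
  have hsqrt : 2 * x < √y := by linarith
  calc
    4 * x ^ 2 = (2 * x) ^ 2 := by ring
    _ < y := (Real.lt_sqrt (by positivity)).1 hsqrt

theorem calW_card_general (n L : ℕ) (h : 2 * L ^ 2 < n) :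
    (calW n L).card = L * (calL n L).card := by
  rw [calW, Finset.card_image_of_injOn (injOn_mul_inv_Icc_product_calL h),
    Finset.card_product, Nat.card_Icc, Nat.add_sub_cancel]

/-- For `n ≥ 2` and a positive integer `L < 0.5·n^{1/2}`,
the set `W` has cardinality exactly `#W = L · #𝓛`. -/
theorem calW_card (n L : ℕ) (hn : 2 ≤ n) (hL : 0 < L)
    (hL2 : (L : ℝ) < 0.5 * Real.sqrt n) :
    (calW n L).card = L * (calL n L).card := by
  have hsq : 4 * L ^ 2 < n := mod_cast four_mul_sq_lt_of_lt_half_mul_sqrt L.cast_nonneg hL2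
  exact calW_card_general n L (by lia)
end
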